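/- A function φ : ℕ → ℂ belongs to R₊(T_∞) if and only if φ belongs to R₊(T_q) for every q with 2 ≤ q < ∞; that is, R₊(T_∞) = ⋂_{q≥2} R₊(T_q). Moreover, for every 2 ≤ q < ∞, R₊(T_{q+1}) ⊆ R₊(T_q). -/

import Mathlib

/-!
All trees involved embed isometrically into trees of words. The tree of words `listTree` has the
finite words over `ℕ` as vertices, a word `a :: l` being joined to `l`; it is a model of `T_∞`.
The words whose letters are `< q`, except for the one next to the root, which may also be `q`,
span a model of `T_q` (`isHomTree_homWords`).

* An injective graph homomorphism from a connected graph to an acyclic one preserves distances,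
  because it maps a geodesic to a path and paths in an acyclic graph are unique
  (`dist_eq_of_injective`).
* A tree with countable degrees, rooted at `r`, maps injectively to the tree of words: label the
  neighbours of each vertex injectively by natural numbers, and send `v` to the labels read along
  the path from `r` to `v` (`exists_word_embedding`).

For a `(q+1)`-homogeneous tree the labels can be taken in `{0, …, q}`, so that the image lies in the
model of `T_{q+1}`; this gives `R₊(T_{q+1}) ⊆ R₊(T_q)`, and `R₊(T_∞) ⊆ R₊(T_q)` follows from the
embedding into the full tree of words. Conversely, finitely many vertices of an infinite-degree tree
use finitely many letters, so they are mapped isometrically into the model of `T_q` for some `q`.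
-/

open MeasureTheory Filter Finset
open scoped ComplexOrder

/-- The polynomials `P_n^{(q)}`. -/
noncomputable def treeP (q : ℕ) : ℕ → ℝ → ℝ
  | 0, _ => 1
  | 1, x => x
  | (n+2), x => (1 + 1/(q:ℝ)) * x * treeP q (n+1) x - (1/(q:ℝ)) * treeP q n x

/-- The polynomials `Q_n^{(q)}`. -/
noncomputable def treeQ (q : ℕ) : ℕ → ℝ → ℝ
  | 0, _ => 1
  | 1, x => (1 + 1/(q:ℝ)) * x
  | (n+2), x => (1 + 1/(q:ℝ)) * x * treeQ q (n+1) x - (1/(q:ℝ)) * treeQ q n x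

/-- A kernel `ψ` on a set `X` is positive definite. -/
def IsPDKernel {X : Type*} (ψ : X → X → ℂ) : Prop :=
  ∀ (n : ℕ) (x : Fin n → X) (z : Fin n → ℂ),
    0 ≤ ∑ i, ∑ j, ψ (x i) (x j) * (starRingEnd ℂ) (z i) * z j

/-- `G` is a `(q+1)`-homogeneous tree: connected, acyclic, every vertex has exactly
`q+1` neighbours. -/
def IsHomTree {V : Type} (G : SimpleGraph V) (q : ℕ) : Prop :=
  G.Connected ∧ G.IsAcyclic ∧ ∀ v : V, (G.neighborSet v).ncard = q + 1

/-- `G` is a homogeneous tree of countably infinite degree. -/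
def IsInfTree {V : Type} (G : SimpleGraph V) : Prop :=
  G.Connected ∧ G.IsAcyclic ∧ ∀ v : V, (G.neighborSet v).Countable ∧ (G.neighborSet v).Infinite


/-! ### Trees of words -/

/-- The tree of words over `ℕ`: each word `a :: l` is joined to `l`. -/
def listTree : SimpleGraph (List ℕ) where
  Adj x y := (∃ a, x = a :: y) ∨ (∃ a, y = a :: x)
  symm := ⟨fun _ _ h => h.symm⟩
  loopless := ⟨fun x h => by rcases h with ⟨a, h⟩ | ⟨a, h⟩ <;> simpa using congrArg List.length h⟩

/-- The words spanning a model of `T_q`: the last letter (the one next to the root `[]`) is at most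
`q`, all others are less than `q`. -/
def homWords (q : ℕ) : Set (List ℕ) :=
  {l | l.rec True fun a t ih => (a < q ∨ (t = [] ∧ a = q)) ∧ ih}

lemma nil_mem_homWords (q : ℕ) : [] ∈ homWords q := trivial

lemma cons_mem_homWords {q a : ℕ} {t : List ℕ} :
    a :: t ∈ homWords q ↔ (a < q ∨ (t = [] ∧ a = q)) ∧ t ∈ homWords q := Iff.rfl

lemma mem_homWords_of_lt {q : ℕ} {l : List ℕ} (h : ∀ a ∈ l, a < q) : l ∈ homWords q := by
  induction l with
  | nil => exact nil_mem_homWords q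
  | cons a t ih =>
    rw [cons_mem_homWords]
    exact ⟨Or.inl (h a (by simp)), ih fun b hb => h b (by simp [hb])⟩

/-- Deleting the edge from `l` to `a :: l` separates the words ending in `a :: l` from the
others. -/
lemma listTree_isAcyclic : listTree.IsAcyclic := by
  have key : ∀ (l : List ℕ) (a : ℕ), listTree.IsBridge s(l, a :: l) := by
    intro l a
    rw [SimpleGraph.isBridge_iff]
    intro hr
    have step : ∀ x y, (listTree.deleteEdges {s(l, a :: l)}).Adj x y →
        (a :: l) <:+ y → (a :: l) <:+ x := by
      intro x y hxy hy
      rw [SimpleGraph.deleteEdges_adj] at hxy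
      obtain ⟨⟨b, rfl⟩ | ⟨b, rfl⟩, hne⟩ := hxy
      · exact hy.trans (List.suffix_cons b y)
      · rcases List.suffix_cons_iff.1 hy with h | h
        · obtain ⟨rfl, rfl⟩ := List.cons.inj h
          simp at hne
        · exact h
    obtain ⟨w⟩ := hr
    have all : ∀ {x y : List ℕ}, (listTree.deleteEdges {s(l, a :: l)}).Walk x y →
        (a :: l) <:+ y → (a :: l) <:+ x := by
      intro x y p
      induction p with
      | nil => exact id
      | cons h _ ih => exact fun hy => step _ _ h (ih hy)
    have := (all w (List.suffix_refl _)).length_le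
    simp at this
  rw [SimpleGraph.isAcyclic_iff_forall_adj_isBridge]
  rintro x y (⟨a, rfl⟩ | ⟨a, rfl⟩)
  · rw [Sym2.eq_swap]
    exact key _ _
  · exact key _ _

lemma induce_connected {S : Set (List ℕ)} (h0 : [] ∈ S) (hS : ∀ a l, a :: l ∈ S → l ∈ S) :
    (listTree.induce S).Connected := by
  have key : ∀ (l : List ℕ) (hl : l ∈ S),
      (listTree.induce S).Reachable ⟨l, hl⟩ ⟨[], h0⟩ := by
    intro l
    induction l with
    | nil => exact fun _ => SimpleGraph.Reachable.refl _
    | cons a t ih =>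
      intro hl
      have hadj : (listTree.induce S).Adj ⟨a :: t, hl⟩ ⟨t, hS a t hl⟩ := Or.inl ⟨a, rfl⟩
      exact hadj.reachable.trans (ih _)
  have : Nonempty S := ⟨⟨[], h0⟩⟩
  exact ⟨fun x y => (key x.1 x.2).trans (key y.1 y.2).symm⟩

lemma listTree_connected : listTree.Connected := by
  have key : ∀ l : List ℕ, listTree.Reachable l [] := by
    intro l
    induction l with
    | nil => exact SimpleGraph.Reachable.refl _
    | cons a t ih =>
      have hadj : listTree.Adj (a :: t) t := Or.inl ⟨a, rfl⟩
      exact hadj.reachable.trans ih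
  exact ⟨fun x y => (key x).trans (key y).symm⟩

lemma isInfTree_listTree : IsInfTree listTree := by
  refine ⟨listTree_connected, listTree_isAcyclic, fun v => ⟨Set.to_countable _, ?_⟩⟩
  refine Set.infinite_of_injective_forall_mem (f := fun a : ℕ => a :: v) ?_ ?_
  · intro a b h
    exact (List.cons.inj h).1
  · exact fun a => Or.inr ⟨a, rfl⟩

lemma isHomTree_homWords (q : ℕ) : IsHomTree (listTree.induce (homWords q)) q := by
  refine ⟨induce_connected (nil_mem_homWords q) fun a l h => (cons_mem_homWords.1 h).2,
    listTree_isAcyclic.induce _, ?_⟩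
  rintro ⟨l, hl⟩
  -- Count the neighbours in `List ℕ` instead of in the subtype.
  rw [← Set.ncard_image_of_injective _ Subtype.val_injective]
  have hcons : Function.Injective fun a : ℕ => a :: l := fun a b h => (List.cons.inj h).1
  cases l with
  | nil =>
    have : Subtype.val '' ((listTree.induce (homWords q)).neighborSet ⟨[], hl⟩)
        = (fun a : ℕ => [a]) '' (Finset.range (q + 1) : Set ℕ) := by
      ext x
      constructor
      · rintro ⟨⟨y, hy⟩, ⟨a, ha⟩ | ⟨a, ha⟩, rfl⟩
        · simp at ha
        · change y = [a] at ha
          subst ha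
          refine ⟨a, ?_, rfl⟩
          have := (cons_mem_homWords.1 hy).1
          simp at this ⊢
          omega
      · rintro ⟨a, ha, rfl⟩
        have ha' : a < q + 1 := by simpa using ha
        refine ⟨⟨[a], cons_mem_homWords.2 ⟨?_, hl⟩⟩, Or.inr ⟨a, rfl⟩, rfl⟩
        simp
        omega
    rw [this, Set.ncard_image_of_injective _ hcons, Set.ncard_coe_finset, Finset.card_range]
  | cons b t =>
    have : Subtype.val '' ((listTree.induce (homWords q)).neighborSet ⟨b :: t, hl⟩)
        = insert t ((fun a : ℕ => a :: b :: t) '' (Finset.range q : Set ℕ)) := by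
      ext x
      constructor
      · rintro ⟨⟨y, hy⟩, ⟨a, ha⟩ | ⟨a, ha⟩, rfl⟩
        · exact Or.inl (List.cons.inj ha).2.symm
        · change y = a :: b :: t at ha
          subst ha
          refine Or.inr ⟨a, ?_, rfl⟩
          have := (cons_mem_homWords.1 hy).1
          simpa using this
      · rintro (rfl | ⟨a, ha, rfl⟩)
        · exact ⟨⟨x, (cons_mem_homWords.1 hl).2⟩, Or.inl ⟨b, rfl⟩, rfl⟩
        · exact ⟨⟨a :: b :: t, cons_mem_homWords.2 ⟨Or.inl (by simpa using ha), hl⟩⟩,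
            Or.inr ⟨a, rfl⟩, rfl⟩
    rw [this, Set.ncard_insert_of_notMem, Set.ncard_image_of_injective _ hcons,
      Set.ncard_coe_finset, Finset.card_range]
    · rintro ⟨a, -, h⟩
      have := congrArg List.length h
      simp at this
      omega

/-! ### Isometric embeddings into the tree of words -/

lemma dist_eq_of_injective {V W : Type} {G : SimpleGraph V} {H : SimpleGraph W}
    (hG : G.Connected) (hH : H.IsAcyclic) (f : V → W) (hf : Function.Injective f)
    (hadj : ∀ x y, G.Adj x y → H.Adj (f x) (f y)) (x y : V) :
    H.dist (f x) (f y) = G.dist x y := by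
  let F : G →g H := ⟨f, fun {a b} h => hadj a b h⟩
  obtain ⟨p, hp, hlen⟩ := hG.exists_path_of_dist x y
  have hp' : (p.map F).IsPath := hp.map hf
  obtain ⟨r, hr, hrlen⟩ := (p.map F).reachable.exists_path_of_dist
  have h := congrArg (fun p : H.Path (F x) (F y) => p.1.length)
    ((hH.subsingleton_path _ _).elim ⟨r, hr⟩ ⟨p.map F, hp'⟩)
  simp only [SimpleGraph.Walk.length_map] at h
  exact hrlen.symm.trans (h.trans hlen)

/-- In a tree rooted at `r`, every vertex other than `r` has exactly one neighbour closer to `r`. -/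
lemma exists_parent {V : Type} {G : SimpleGraph V} (hG : G.Connected) (hA : G.IsAcyclic)
    (r v : V) (hv : v ≠ r) :
    ∃ u, G.Adj u v ∧ G.dist r v = G.dist r u + 1 ∧
      ∀ u', G.Adj u' v → G.dist r v = G.dist r u' + 1 → u' = u := by
  obtain ⟨p, hp, hlen⟩ := hG.exists_path_of_dist r v
  have hnil : ¬ p.Nil := SimpleGraph.Walk.not_nil_of_ne hv.symm
  have huniq : ∀ u', G.Adj u' v → G.dist r v = G.dist r u' + 1 → u' = p.penultimate := by
    intro u' h1 h2
    obtain ⟨s, -, hs⟩ := hG.exists_path_of_dist r u'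
    have hpath : (s.concat h1).IsPath := by
      apply SimpleGraph.Walk.isPath_of_length_eq_dist
      rw [SimpleGraph.Walk.length_concat, hs, h2]
    have h := congrArg (fun p : G.Path r v => p.1.penultimate)
      ((hA.subsingleton_path _ _).elim ⟨_, hpath⟩ ⟨p, hp⟩)
    simpa using h
  have hadj := p.adj_penultimate hnil
  refine ⟨p.penultimate, hadj, ?_, huniq⟩
  have h1 : G.dist r p.penultimate ≤ p.dropLast.length := SimpleGraph.dist_le _
  have h2 : p.dropLast.length + 1 = p.length := SimpleGraph.Walk.length_dropLast_add_one hnil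
  have h3 : G.dist r v ≤ G.dist r p.penultimate + G.dist p.penultimate v := hG.dist_triangle
  rw [SimpleGraph.dist_eq_one_iff_adj.2 hadj] at h3
  omega

/-- Here `e u` labels the neighbours of `u`, and `f v` is the word of labels read along the path
from a root to `v`; hence `f` only uses letters that occur as labels. -/
lemma exists_word_embedding {V : Type} {G : SimpleGraph V} (hG : G.Connected) (hA : G.IsAcyclic)
    (e : V → V → ℕ) (he : ∀ u, Set.InjOn (e u) (G.neighborSet u)) :
    ∃ f : V → List ℕ, Function.Injective f ∧
      (∀ x y, G.Adj x y → listTree.Adj (f x) (f y)) ∧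
      ∀ v, ∀ a ∈ f v, ∃ u w, G.Adj u w ∧ a = e u w := by
  obtain ⟨r⟩ := hG.nonempty
  choose! p hp1 hp2 hp3 using exists_parent hG hA r
  -- The recursion runs over the distance to the root.
  let F : ℕ → V → List ℕ := fun n => n.rec (fun _ => []) fun _ g v => e (p v) v :: g (p v)
  let f : V → List ℕ := fun v => F (G.dist r v) v
  have f0 : f r = [] := by
    simp only [f, SimpleGraph.dist_self]
    rfl
  have f1 : ∀ v, v ≠ r → f v = e (p v) v :: f (p v) := by
    intro v hv
    simp only [f]
    rw [hp2 v hv]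
  refine ⟨f, ?_, ?_, ?_⟩
  · have key : ∀ (l : List ℕ) (v w : V), f v = l → f w = l → v = w := by
      intro l
      induction l with
      | nil =>
        have h : ∀ v, f v = [] → v = r := by
          intro v hv
          by_contra hne
          rw [f1 v hne] at hv
          simp at hv
        exact fun v w hv hw => (h v hv).trans (h w hw).symm
      | cons a t ih =>
        have h : ∀ v, f v = a :: t → v ≠ r := by
          rintro v hv rfl
          rw [f0] at hv
          simp at hv
        intro v w hv hw
        have hvr := h v hv
        have hwr := h w hw
        rw [f1 v hvr] at hv
        rw [f1 w hwr] at hw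
        obtain ⟨hv1, hv2⟩ := List.cons.inj hv
        obtain ⟨hw1, hw2⟩ := List.cons.inj hw
        have hpp := ih _ _ hv2 hw2
        have hwp := hp1 w hwr
        rw [← hpp] at hw1 hwp
        exact he (p v) (hp1 v hvr) hwp (hv1.trans hw1.symm)
    exact fun v w h => key _ v w h rfl
  · have key : ∀ x y, G.Adj x y → G.dist r y = G.dist r x + 1 → listTree.Adj (f x) (f y) := by
      intro x y h hd
      have hy : y ≠ r := by
        rintro rfl
        simp at hd
      rw [f1 y hy, ← hp3 y hy x h hd]
      exact Or.inr ⟨_, rfl⟩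
    intro x y h
    rcases hA.dist_eq_dist_add_one_of_adj_of_reachable r h (hG r x) with hd | hd
    · exact (key y x h.symm hd).symm
    · exact key x y h hd
  · have key : ∀ (l : List ℕ) (v : V), f v = l → ∀ a ∈ l, ∃ u w, G.Adj u w ∧ a = e u w := by
      intro l
      induction l with
      | nil => simp
      | cons b t ih =>
        intro v hv a ha
        have hvr : v ≠ r := by
          rintro rfl
          rw [f0] at hv
          simp at hv
        rw [f1 v hvr] at hv
        obtain ⟨hv1, hv2⟩ := List.cons.inj hv
        rcases List.mem_cons.1 ha with rfl | ha
        · exact ⟨_, _, hp1 v hvr, hv1.symm⟩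
        · exact ih _ hv2 a ha
    exact fun v => key _ v rfl

lemma exists_countable_labels {V : Type} {G : SimpleGraph V}
    (h : ∀ v, (G.neighborSet v).Countable) :
    ∃ e : V → V → ℕ, ∀ u, Set.InjOn (e u) (G.neighborSet u) := by
  choose e he using fun v => Set.countable_iff_exists_injOn.1 (h v)
  exact ⟨e, he⟩

lemma exists_finite_labels {V : Type} {G : SimpleGraph V} {m : ℕ}
    (h : ∀ v, (G.neighborSet v).ncard = m + 1) :
    ∃ e : V → V → ℕ, (∀ u, Set.InjOn (e u) (G.neighborSet u)) ∧
      ∀ u w, G.Adj u w → e u w < m + 1 := by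
  have : ∀ v, ∃ g : V → ℕ, Set.InjOn g (G.neighborSet v) ∧ ∀ w, G.Adj v w → g w < m + 1 := by
    intro v
    have hfin : (G.neighborSet v).Finite := Set.finite_of_ncard_ne_zero (by rw [h v]; omega)
    obtain ⟨g, hg1, hg2⟩ := hfin.exists_injOn_of_encard_le
      (s := G.neighborSet v) (t := Set.Iio (m + 1)) (by
        rw [← hfin.cast_ncard_eq, ← (Set.finite_Iio (m + 1)).cast_ncard_eq, h v]
        simp [Set.ncard_eq_toFinset_card'])
    exact ⟨g, hg2, fun w hw => hg1 hw⟩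
  choose e he1 he2 using this
  exact ⟨e, he1, he2⟩

/-! ### Transfer of positive definiteness -/

lemma isPDKernel_of_map {V W : Type} {G : SimpleGraph V} {H : SimpleGraph W} {φ : ℕ → ℂ}
    (hH : IsPDKernel (fun x y => φ (H.dist x y))) (f : V → W)
    (hf : ∀ x y, H.dist (f x) (f y) = G.dist x y) :
    IsPDKernel (fun x y => φ (G.dist x y)) := by
  intro n x z
  simpa only [hf] using hH n (fun i => f (x i)) z

theorem stmt_19 (φ : ℕ → ℂ) :
    ((∀ (V : Type) (G : SimpleGraph V), IsInfTree G →
        IsPDKernel (fun x y => φ (G.dist x y)))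
      ↔ (∀ q : ℕ, 2 ≤ q → ∀ (V : Type) (G : SimpleGraph V), IsHomTree G q →
          IsPDKernel (fun x y => φ (G.dist x y)))) ∧
    (∀ q : ℕ, 2 ≤ q →
      (∀ (V : Type) (G : SimpleGraph V), IsHomTree G (q+1) →
          IsPDKernel (fun x y => φ (G.dist x y))) →
      (∀ (V : Type) (G : SimpleGraph V), IsHomTree G q →
          IsPDKernel (fun x y => φ (G.dist x y)))) := by
  refine ⟨⟨?_, ?_⟩, ?_⟩
  · rintro h q - V G ⟨hG, hA, hdeg⟩
    obtain ⟨e, he, -⟩ := exists_finite_labels hdeg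
    obtain ⟨f, hf, hadj, -⟩ := exists_word_embedding hG hA e he
    exact isPDKernel_of_map (h _ _ isInfTree_listTree) f
      (dist_eq_of_injective hG listTree_isAcyclic f hf hadj)
  · rintro h V G ⟨hG, hA, hdeg⟩ n x z
    obtain ⟨e, he⟩ := exists_countable_labels fun v => (hdeg v).1
    obtain ⟨f, hf, hadj, -⟩ := exists_word_embedding hG hA e he
    -- A bound on all letters of the finitely many words `f (x i)`.
    let q : ℕ := (∑ i, (f (x i)).sum) + 2
    have hmem : ∀ i, f (x i) ∈ homWords q := by
      refine fun i => mem_homWords_of_lt fun a ha => ?_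
      have h1 : a ≤ (f (x i)).sum := List.le_sum_of_mem ha
      have h2 : (f (x i)).sum ≤ ∑ i, (f (x i)).sum :=
        Finset.single_le_sum (f := fun i => (f (x i)).sum) (fun _ _ => Nat.zero_le _)
          (Finset.mem_univ i)
      simp only [q]
      omega
    have hT := isHomTree_homWords q
    have hd : ∀ i j, (listTree.induce (homWords q)).dist ⟨f (x i), hmem i⟩ ⟨f (x j), hmem j⟩
        = G.dist (x i) (x j) := fun i j =>
      (dist_eq_of_injective hT.1 listTree_isAcyclic Subtype.val Subtype.val_injective
        (fun _ _ h => h) _ _).symm.trans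
        (dist_eq_of_injective hG listTree_isAcyclic f hf hadj _ _)
    simpa only [hd] using h q (by omega) _ _ hT n (fun i => ⟨f (x i), hmem i⟩) z
  · rintro q - h V G ⟨hG, hA, hdeg⟩
    obtain ⟨e, he, hlt⟩ := exists_finite_labels hdeg
    obtain ⟨f, hf, hadj, hlet⟩ := exists_word_embedding hG hA e he
    have hmem : ∀ v, f v ∈ homWords (q + 1) := by
      refine fun v => mem_homWords_of_lt fun a ha => ?_
      obtain ⟨u, w, huw, rfl⟩ := hlet v a ha
      exact hlt u w huw
    have hT := isHomTree_homWords (q + 1)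
    exact isPDKernel_of_map (h _ _ hT) (fun v => ⟨f v, hmem v⟩)
      (dist_eq_of_injective hG hT.2.1 _ (fun a b hab => hf (congrArg Subtype.val hab))
        fun a b hab => hadj a b hab)
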